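/- Let m > 0, let B and M be positive integers, let s > 0, and let 0 < R ≤ M. Let γ_1, …, γ_B be i.i.d. random variables with law μ_m, set p = Pr(γ_1 > (2^M − 1)/s), and let ν_s denote the law of A(s) (the law of log₂(1 + γ s) for γ ∼ μ_m conditioned on {γ ≤ (2^M − 1)/s}). Then Pr( Σ_{b=1}^B min(M, log₂(1 + γ_b s)) < B R ) = Σ_{t=0}^{⌈BR/M⌉ − 1} C(B, t) p^t (1 − p)^{B − t} · ν_s^{⊗(B−t)}( { a ∈ ℝ^{B−t} : Σ_{k=1}^{B−t} a_k < B R − t M } ), where C(B, t) is the binomial coefficient. -/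

import Mathlib

open MeasureTheory ProbabilityTheory Real Filter

/-- Density of the Nakagami-m fading power gain (Gamma distribution, shape m, rate m). -/
noncomputable def fgamma (m x : ℝ) : ℝ :=
  if 0 ≤ x then m ^ m * x ^ (m - 1) * Real.exp (-(m * x)) / Real.Gamma m else 0

/-- The Nakagami-m fading power gain law μ_m. -/
noncomputable def muN (m : ℝ) : Measure ℝ :=
  MeasureTheory.volume.withDensity fun x => ENNReal.ofReal (fgamma m x)

/-- CDF of μ_m. -/
noncomputable def Fgamma (m x : ℝ) : ℝ := ∫ t in (0:ℝ)..x, fgamma m t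

/-- Law of A(s) = log₂(1+γs) for γ ∼ μ_m conditioned on {γ ≤ (2^M-1)/s}. -/
noncomputable def nuA (m : ℝ) (M : ℕ) (s : ℝ) : Measure ℝ :=
  Measure.map (fun x => Real.logb 2 (1 + x * s))
    ((muN m)[|{x : ℝ | x ≤ ((2:ℝ) ^ M - 1) / s}])


/-!
The law of the capped variable `min c X` is a mixture of the law of `X` conditioned on `X ≤ c` and
of an atom at `c`. Convolution of measures is bilinear and commutative, so the law of a sum of `n`
independent copies is given by the binomial theorem, where convolving with the `t`-th power of the
atom is translation by `t * c`. Since `X` is nonnegative, the terms with `x ≤ t * c` do not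
contribute to the event that the sum is below `x`.
-/

open scoped ENNReal
open Finset.HasAntidiagonal (antidiagonal)

section IIDSum

variable {E : Type*} [AddCommMonoid E] [MeasurableSpace E]

/-- The `n`-fold convolution power of `ν`, encoded as the push-forward of the product measure under
summation of the coordinates; for a probability measure `ν` this is the law of the sum of `n`
independent variables of law `ν`. -/
noncomputable def iidSum (ν : Measure E) (n : ℕ) : Measure E :=
  (Measure.pi fun _ : Fin n => ν).map fun a => ∑ k, a k

instance (ν : Measure E) [IsFiniteMeasure ν] (n : ℕ) : IsFiniteMeasure (iidSum ν n) := by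
  unfold iidSum; infer_instance

lemma iidSum_zero (ν : Measure E) : iidSum ν 0 = Measure.dirac 0 := by
  simp [iidSum, Measure.pi_of_empty (fun _ : Fin 0 => ν)]

variable [MeasurableAdd₂ E]

lemma iidSum_succ (ν : Measure E) [SigmaFinite ν] (n : ℕ) :
    iidSum ν (n + 1) = ν ∗ iidSum ν n := by
  have split_first := measurePreserving_piFinSuccAbove (fun _ : Fin (n + 1) => ν) 0
  calc iidSum ν (n + 1)
      = (((Measure.pi fun _ : Fin (n + 1) => ν).map
          (MeasurableEquiv.piFinSuccAbove (fun _ => E) 0)).map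
          (Prod.map id fun a : Fin n → E => ∑ k, a k)).map fun z => z.1 + z.2 := by
        rw [Measure.map_map (by fun_prop) (by fun_prop),
          Measure.map_map (by fun_prop) (by fun_prop)]
        exact congrArg (Measure.map · _) (funext fun a => Fin.sum_univ_succ a)
    _ = ν ∗ iidSum ν n := by
        rw [split_first.map_eq, ← Measure.map_prod_map _ _ (by fun_prop) (by fun_prop),
          Measure.map_id]
        rfl

lemma iidSum_map {Ω : Type*} [MeasurableSpace Ω] (μ : Measure Ω) [IsFiniteMeasure μ] {X : Ω → E}
    (hX : Measurable X) (n : ℕ) :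
    iidSum (μ.map X) n = (Measure.pi fun _ : Fin n => μ).map fun ω => ∑ k, X (ω k) := by
  rw [iidSum, ← Measure.pi_map_pi fun _ => hX.aemeasurable,
    Measure.map_map (by fun_prop) (by fun_prop)]
  rfl

lemma conv_finsetSum {ι : Type*} (s : Finset ι) (μ : Measure E) (ν : ι → Measure E)
    [∀ i, SFinite (ν i)] : μ ∗ ∑ i ∈ s, ν i = ∑ i ∈ s, μ ∗ ν i := by
  simp only [Measure.conv, ← Measure.sum_coe_finset, Measure.prod_sum_right]
  exact Measure.map_sum (by fun_prop)

lemma conv_left_comm (μ ν ρ : Measure E) [SFinite μ] [SFinite ν] [SFinite ρ] :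
    μ ∗ (ν ∗ ρ) = ν ∗ (μ ∗ ρ) := by
  rw [← Measure.conv_assoc, Measure.conv_comm μ ν, Measure.conv_assoc]

theorem iidSum_smul_add_smul_dirac (ν : Measure E) [IsFiniteMeasure ν] {p q : ℝ≥0∞} (hp : p ≠ ∞)
    (hq : q ≠ ∞) (c : E) (n : ℕ) :
    iidSum (q • ν + p • Measure.dirac c) n =
      ∑ ij ∈ antidiagonal n,
        n.choose ij.1 • (p ^ ij.1 * q ^ ij.2) • (Measure.dirac (ij.1 • c) ∗ iidSum ν ij.2) := by
  have := ν.smul_finite hq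
  have := (Measure.dirac c).smul_finite hp
  induction n with
  | zero => simp [iidSum_zero]
  | succ n ih =>
    have conv_smul_term (i j : ℕ) :
        (q • ν) ∗ ((p ^ i * q ^ j) • (Measure.dirac (i • c) ∗ iidSum ν j)) =
          (p ^ i * q ^ (j + 1)) • (Measure.dirac (i • c) ∗ iidSum ν (j + 1)) := by
      rw [Measure.conv_smul_left, Measure.conv_smul_right, smul_smul, conv_left_comm, iidSum_succ,
        pow_succ, mul_comm q, mul_assoc]
    have conv_smul_dirac_term (i j : ℕ) :
        (p • Measure.dirac c) ∗ ((p ^ i * q ^ j) • (Measure.dirac (i • c) ∗ iidSum ν j)) =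
          (p ^ (i + 1) * q ^ j) • (Measure.dirac ((i + 1) • c) ∗ iidSum ν j) := by
      rw [Measure.conv_smul_left, Measure.conv_smul_right, smul_smul, ← Measure.conv_assoc,
        Measure.dirac_conv_dirac, succ_nsmul', pow_succ', mul_assoc]
    have choose_symm : ∀ ij ∈ antidiagonal n, n.choose ij.2 = n.choose ij.1 := fun ij hij =>
      Nat.choose_symm_of_eq_add (by rw [← Finset.HasAntidiagonal.mem_antidiagonal.mp hij, add_comm])
    rw [iidSum_succ, ih, conv_finsetSum, Finset.sum_antidiagonal_choose_succ_nsmul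
      (fun i j => (p ^ i * q ^ j) • (Measure.dirac (i • c) ∗ iidSum ν j)),
      ← Finset.sum_add_distrib]
    refine Finset.sum_congr rfl fun ij hij => ?_
    rw [← Nat.cast_smul_eq_nsmul ℝ≥0∞, Measure.conv_smul_right, Measure.add_conv, conv_smul_term,
      conv_smul_dirac_term, choose_symm ij hij, ← nsmul_add, Nat.cast_smul_eq_nsmul]

end IIDSum

section IIDSumReal

lemma iidSum_real_Iio (ν : Measure ℝ) (n : ℕ) (x : ℝ) :
    (iidSum ν n).real (Set.Iio x) = (Measure.pi fun _ : Fin n => ν).real {a | ∑ k, a k < x} :=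
  map_measureReal_apply (by fun_prop) measurableSet_Iio

lemma dirac_conv_real_Iio (ν : Measure ℝ) [SFinite ν] (c x : ℝ) :
    (Measure.dirac c ∗ ν).real (Set.Iio x) = ν.real (Set.Iio (x - c)) := by
  rw [Measure.dirac_conv, map_measureReal_apply (by fun_prop) measurableSet_Iio,
    Set.preimage_const_add_Iio]

variable {ν : Measure ℝ} [IsFiniteMeasure ν] (n : ℕ)

lemma iidSum_real_Iio_of_nonpos {x : ℝ} (hν : ∀ᵐ y ∂ν, 0 ≤ y) (hx : x ≤ 0) :
    (iidSum ν n).real (Set.Iio x) = 0 := by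
  have coord_nonneg (k : Fin n) : ∀ᵐ a ∂(Measure.pi fun _ : Fin n => ν), 0 ≤ a k :=
    (Measure.quasiMeasurePreserving_eval (μ := fun _ : Fin n => ν) k).ae hν
  have sum_not_lt : ∀ᵐ a ∂(Measure.pi fun _ : Fin n => ν), ¬ ∑ k, a k < x := by
    filter_upwards [ae_all_iff.mpr coord_nonneg] with a ha
    exact not_lt.mpr (hx.trans (Finset.sum_nonneg fun k _ => ha k))
  rw [iidSum_real_Iio, measureReal_eq_zero_iff]
  exact measure_eq_zero_iff_ae_notMem.mpr sum_not_lt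

lemma iidSum_smul_add_smul_dirac_real_Iio {p q : ℝ≥0∞} (hp : p ≠ ∞) (hq : q ≠ ∞) (c x : ℝ) :
    (iidSum (q • ν + p • Measure.dirac c) n).real (Set.Iio x) =
      ∑ t ∈ Finset.range (n + 1), n.choose t * p.toReal ^ t * q.toReal ^ (n - t) *
        (iidSum ν (n - t)).real (Set.Iio (x - t * c)) := by
  rw [iidSum_smul_add_smul_dirac ν hp hq, Finset.Nat.sum_antidiagonal_eq_sum_range_succ_mk,
    measureReal_def, Measure.finsetSum_apply, ENNReal.toReal_sum]
  · refine Finset.sum_congr rfl fun t _ => ?_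
    rw [← Nat.cast_smul_eq_nsmul ℝ≥0∞, ← measureReal_def, measureReal_ennreal_smul_apply,
      measureReal_ennreal_smul_apply, dirac_conv_real_Iio]
    simp [mul_assoc]
  · intro t _
    rw [← Nat.cast_smul_eq_nsmul ℝ≥0∞, smul_smul]
    have weight_ne_top : (n.choose t : ℝ≥0∞) * (p ^ t * q ^ (n - t)) ≠ ∞ :=
      ENNReal.mul_ne_top (ENNReal.natCast_ne_top _)
        (ENNReal.mul_ne_top (ENNReal.pow_ne_top hp) (ENNReal.pow_ne_top hq))
    exact ENNReal.mul_ne_top weight_ne_top (measure_ne_top _ _)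

end IIDSumReal

section Capped

variable {Ω : Type*} [MeasurableSpace Ω] {μ : Measure Ω} {S : Set Ω}

lemma measure_smul_cond_eq_restrict (hS : μ S ≠ ∞) : μ S • μ[|S] = μ.restrict S := by
  by_cases hμS : μ S = 0
  · rw [hμS, zero_smul, Measure.restrict_eq_zero.mpr hμS]
  · rw [ProbabilityTheory.cond, smul_smul, ENNReal.mul_inv_cancel hμS hS, one_smul]

variable [IsFiniteMeasure μ] {X : Ω → ℝ} {c : ℝ}

lemma map_min_eq_smul_map_cond_add_smul_dirac (hX : Measurable X) (hS : MeasurableSet S)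
    (hSX : ∀ᵐ ω ∂μ, ω ∈ S ↔ X ω ≤ c) :
    μ.map (fun ω => min c (X ω)) = μ S • (μ[|S]).map X + μ Sᶜ • Measure.dirac c := by
  have on_S : (μ.restrict S).map (fun ω => min c (X ω)) = (μ.restrict S).map X := by
    refine Measure.map_congr ?_
    filter_upwards [ae_restrict_mem hS, ae_restrict_of_ae hSX] with ω hω hωX
    exact min_eq_right (hωX.mp hω)
  have off_S : (μ.restrict Sᶜ).map (fun ω => min c (X ω)) = (μ.restrict Sᶜ).map fun _ => c := by
    refine Measure.map_congr ?_
    filter_upwards [ae_restrict_mem hS.compl, ae_restrict_of_ae hSX] with ω hω hωX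
    exact min_eq_left (not_le.mp (mt hωX.mpr hω)).le
  calc μ.map (fun ω => min c (X ω))
      = (μ.restrict S).map (fun ω => min c (X ω)) +
          (μ.restrict Sᶜ).map (fun ω => min c (X ω)) := by
        rw [← Measure.map_add _ _ (by fun_prop), Measure.restrict_add_restrict_compl hS]
    _ = μ S • (μ[|S]).map X + μ Sᶜ • Measure.dirac c := by
        rw [on_S, off_S, ← Measure.map_smul, measure_smul_cond_eq_restrict (measure_ne_top μ S),
          Measure.map_const, Measure.restrict_apply_univ]

theorem measureReal_pi_sum_min_lt (hX : Measurable X) (hS : MeasurableSet S)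
    (hSX : ∀ᵐ ω ∂μ, ω ∈ S ↔ X ω ≤ c) (hX_nonneg : ∀ᵐ ω ∂μ, 0 ≤ X ω) (hc : 0 < c) (n : ℕ) (x : ℝ) :
    (Measure.pi fun _ : Fin n => μ).real {ω | ∑ k, min c (X (ω k)) < x} =
      ∑ t ∈ Finset.range ⌈x / c⌉₊, n.choose t * μ.real Sᶜ ^ t * μ.real S ^ (n - t) *
        (Measure.pi fun _ : Fin (n - t) => (μ[|S]).map X).real {a | ∑ k, a k < x - t * c} := by
  have cond_nonneg : ∀ᵐ y ∂(μ[|S]).map X, 0 ≤ y :=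
    (ae_map_iff hX.aemeasurable measurableSet_Ici).mpr (cond_absolutelyContinuous.ae_le hX_nonneg)
  have law_capped_sum : (Measure.pi fun _ : Fin n => μ).real {ω | ∑ k, min c (X (ω k)) < x} =
      (iidSum (μ S • (μ[|S]).map X + μ Sᶜ • Measure.dirac c) n).real (Set.Iio x) := by
    rw [← map_min_eq_smul_map_cond_add_smul_dirac hX hS hSX, iidSum_map _ (by fun_prop),
      map_measureReal_apply (by fun_prop) measurableSet_Iio]
    rfl
  rw [law_capped_sum,
    iidSum_smul_add_smul_dirac_real_Iio _ (measure_ne_top _ _) (measure_ne_top _ _)]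
  refine Finset.sum_congr_of_eq_on_inter (fun t _ ht => ?_) (fun t _ ht => ?_) fun t _ _ => ?_
  · have shift_nonpos : x - t * c ≤ 0 := by
      rwa [Finset.mem_range, not_lt, Nat.ceil_le, div_le_iff₀ hc, ← sub_nonpos] at ht
    rw [iidSum_real_Iio_of_nonpos _ cond_nonneg shift_nonpos, mul_zero]
  · have n_lt_t : n < t := by simpa [Nat.lt_succ_iff] using ht
    simp only [Nat.choose_eq_zero_of_lt n_lt_t, Nat.cast_zero, zero_mul]
  · rw [iidSum_real_Iio]
    rfl

end Capped

section Fading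

variable {b x s c : ℝ}

lemma logb_one_add_mul_nonneg (hb : 1 < b) (hx : 0 ≤ x) (hs : 0 ≤ s) : 0 ≤ logb b (1 + x * s) :=
  logb_nonneg hb (le_add_of_nonneg_right (mul_nonneg hx hs))

lemma logb_one_add_mul_le_iff (hb : 1 < b) (hx : 0 ≤ x) (hs : 0 < s) :
    logb b (1 + x * s) ≤ c ↔ x ≤ (b ^ c - 1) / s := by
  rw [logb_le_iff_le_rpow hb (by positivity), le_div_iff₀ hs, le_sub_iff_add_le']

theorem stmt_5_general (μ : Measure ℝ) [IsProbabilityMeasure μ] (hμ : ∀ᵐ y ∂μ, 0 ≤ y)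
    (hs : 0 < s) (hc : 0 < c) (n : ℕ) (x : ℝ) :
    (Measure.pi fun _ : Fin n => μ).real {γ | ∑ b, min c (logb 2 (1 + γ b * s)) < x} =
      ∑ t ∈ Finset.range ⌈x / c⌉₊,
        n.choose t * μ.real {y | (2 ^ c - 1) / s < y} ^ t *
          (1 - μ.real {y | (2 ^ c - 1) / s < y}) ^ (n - t) *
          (Measure.pi fun _ : Fin (n - t) =>
            (μ[|{y | y ≤ (2 ^ c - 1) / s}]).map fun y => logb 2 (1 + y * s)).real
              {a | ∑ k, a k < x - t * c} := by
  set S := {y : ℝ | y ≤ (2 ^ c - 1) / s}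
  have compl_S : {y : ℝ | (2 ^ c - 1) / s < y} = Sᶜ := Set.compl_Iic.symm
  have hS : MeasurableSet S := measurableSet_Iic
  rw [compl_S, probReal_compl_eq_one_sub hS, sub_sub_cancel, ← probReal_compl_eq_one_sub hS]
  exact measureReal_pi_sum_min_lt (by unfold logb; fun_prop) hS
    (hμ.mono fun y hy => (logb_one_add_mul_le_iff one_lt_two hy hs).symm)
    (hμ.mono fun y hy => logb_one_add_mul_nonneg one_lt_two hy hs.le) hc n x

lemma muN_eq_gammaMeasure (m : ℝ) : muN m = gammaMeasure m m := by
  simp only [muN, gammaMeasure, fgamma, mul_div_right_comm, funext (gammaPDF_eq m m)]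

lemma isProbabilityMeasure_muN {m : ℝ} (hm : 0 < m) : IsProbabilityMeasure (muN m) :=
  muN_eq_gammaMeasure m ▸ isProbabilityMeasure_gammaMeasure hm hm

lemma ae_muN_nonneg (m : ℝ) : ∀ᵐ x ∂muN m, 0 ≤ x := by
  have : {x : ℝ | ¬0 ≤ x} = Set.Iio 0 := by simp only [not_le]; rfl
  rw [ae_iff, this, muN_eq_gammaMeasure, gammaMeasure, withDensity_apply _ measurableSet_Iio,
    lintegral_gammaPDF_of_nonpos le_rfl]

end Fading

/-- exact binomial/conditional decomposition of the lower bound to the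
outage probability. -/
theorem stmt_5 (m : ℝ) (hm : 0 < m) (B M : ℕ) (hB : 0 < B) (hM : 0 < M)
    (s : ℝ) (hs : 0 < s) (R : ℝ) (hR0 : 0 < R) (hRM : R ≤ (M : ℝ))
    (p : ℝ) (hp : p = ((muN m) {x : ℝ | ((2:ℝ) ^ M - 1) / s < x}).toReal) :
    ((Measure.pi fun _ : Fin B => muN m)
        {γ : Fin B → ℝ | ∑ b, min (M : ℝ) (Real.logb 2 (1 + γ b * s)) < (B : ℝ) * R}).toReal
      = ∑ t ∈ Finset.range (⌈(B : ℝ) * R / (M : ℝ)⌉.toNat),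
          (B.choose t : ℝ) * p ^ t * (1 - p) ^ (B - t) *
            ((Measure.pi fun _ : Fin (B - t) => nuA m M s)
              {a : Fin (B - t) → ℝ | ∑ k, a k < (B : ℝ) * R - (t : ℝ) * (M : ℝ)}).toReal := by
  have := isProbabilityMeasure_muN hm
  simp only [hp, Int.ceil_toNat, nuA, ← rpow_natCast 2 M]
  exact stmt_5_general (muN m) (ae_muN_nonneg m) hs (Nat.cast_pos.mpr hM) B (B * R)
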